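/- arXiv:math/0306352 — 10 statements merged into one kernel-verified Lean document; each statement's English description precedes it below -/
import Mathlib

section
/- Let H be an inner product space over 𝕜 (𝕜 = ℝ or ℂ) and let a, A ∈ 𝕜 satisfy Re(conj(a)·A) > 0. If x, y ∈ H satisfy Re⟨A·y − x, x − a·y⟩ ≥ 0, then ‖x‖·‖y‖ ≤ (1/2)·Re[A·conj(⟨x,y⟩) + conj(a)·⟨x,y⟩] / (Re(conj(a)·A))^(1/2), and this quantity is in turn ≤ (1/2)·(|A| + |a|) / (Re(conj(a)·A))^(1/2) · |⟨x,y⟩|. -/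
open RCLike ComplexConjugate

/-!
Expanding the hypothesis gives
`re (conj a * A) * ‖y‖ ^ 2 + ‖x‖ ^ 2 ≤ re (A * conj ⟪y, x⟫ + conj a * ⟪y, x⟫)`, and by AM-GM the
left-hand side is at least `2 * √(re (conj a * A)) * ‖x‖ * ‖y‖`. The second inequality is the
triangle inequality.
-/

open scoped InnerProductSpace

section

variable {𝕜 : Type*} [RCLike 𝕜]

theorem re_mul_conj_add_conj_mul_le (A a z : 𝕜) :
    re (A * conj z + conj a * z) ≤ (‖A‖ + ‖a‖) * ‖z‖ :=
  calc
    re (A * conj z + conj a * z) ≤ ‖A * conj z + conj a * z‖ := re_le_norm _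
    _ ≤ ‖A * conj z‖ + ‖conj a * z‖ := norm_add_le _ _
    _ = (‖A‖ + ‖a‖) * ‖z‖ := by rw [norm_mul, norm_mul, norm_conj, norm_conj, add_mul]

variable {H : Type*} [SeminormedAddCommGroup H] [InnerProductSpace 𝕜 H]

theorem inner_smul_sub_sub_smul (a A : 𝕜) (x y : H) :
    ⟪A • y - x, x - a • y⟫_𝕜 =
      conj (A * conj ⟪y, x⟫_𝕜 + conj a * ⟪y, x⟫_𝕜) -
        conj (conj a * A) * (‖y‖ ^ 2 : ℝ) - (‖x‖ ^ 2 : ℝ) := by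
  simp only [inner_sub_left, inner_sub_right, inner_smul_left, inner_smul_right,
    inner_self_eq_norm_sq_to_K, map_add, map_mul, conj_conj, inner_conj_symm, ofReal_pow]
  ring

theorem re_inner_smul_sub_sub_smul (a A : 𝕜) (x y : H) :
    re ⟪A • y - x, x - a • y⟫_𝕜 =
      re (A * conj ⟪y, x⟫_𝕜 + conj a * ⟪y, x⟫_𝕜) - re (conj a * A) * ‖y‖ ^ 2 - ‖x‖ ^ 2 := by
  rw [inner_smul_sub_sub_smul, map_sub, map_sub, conj_re, re_mul_ofReal, conj_re, ofReal_re]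

theorem norm_mul_norm_mul_sqrt_le {a A : 𝕜} (ha : 0 ≤ re (conj a * A)) {x y : H}
    (h : 0 ≤ re ⟪A • y - x, x - a • y⟫_𝕜) :
    ‖x‖ * ‖y‖ * √(re (conj a * A)) ≤
      1 / 2 * re (A * conj ⟪y, x⟫_𝕜 + conj a * ⟪y, x⟫_𝕜) := by
  have amgm : 2 * ‖x‖ * (√(re (conj a * A)) * ‖y‖) ≤
      ‖x‖ ^ 2 + re (conj a * A) * ‖y‖ ^ 2 := by
    simpa only [mul_pow, Real.sq_sqrt ha] using
      two_mul_le_add_sq ‖x‖ (√(re (conj a * A)) * ‖y‖)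
  rw [re_inner_smul_sub_sub_smul] at h
  linarith

theorem reverse_schwarz_inequality_general (a A : 𝕜) (ha : 0 < re (conj a * A)) (x y : H)
    (h : 0 ≤ re ⟪A • y - x, x - a • y⟫_𝕜) :
    ‖x‖ * ‖y‖ ≤
        1 / 2 * re (A * conj ⟪y, x⟫_𝕜 + conj a * ⟪y, x⟫_𝕜) / √(re (conj a * A)) ∧
      1 / 2 * re (A * conj ⟪y, x⟫_𝕜 + conj a * ⟪y, x⟫_𝕜) / √(re (conj a * A)) ≤
        1 / 2 * ((‖A‖ + ‖a‖) / √(re (conj a * A))) * ‖⟪y, x⟫_𝕜‖ := by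
  refine ⟨(le_div_iff₀ (Real.sqrt_pos.mpr ha)).mpr (norm_mul_norm_mul_sqrt_le ha.le h), ?_⟩
  calc
    1 / 2 * re (A * conj ⟪y, x⟫_𝕜 + conj a * ⟪y, x⟫_𝕜) / √(re (conj a * A))
    _ ≤ 1 / 2 * ((‖A‖ + ‖a‖) * ‖⟪y, x⟫_𝕜‖) / √(re (conj a * A)) := by
      gcongr
      exact re_mul_conj_add_conj_mul_le A a ⟪y, x⟫_𝕜
    _ = 1 / 2 * ((‖A‖ + ‖a‖) / √(re (conj a * A))) * ‖⟪y, x⟫_𝕜‖ := by ring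

end

/-- Theorem 2.1 (reverse of Schwarz's inequality).  Here the inner product
`⟪·,·⟫` is Mathlib's (conjugate-linear in the first variable), so the paper's
`⟨x,y⟩` is written `⟪y, x⟫`. -/
theorem reverse_schwarz_inequality {𝕜 H : Type*} [RCLike 𝕜] [NormedAddCommGroup H]
    [InnerProductSpace 𝕜 H] (a A : 𝕜) (ha : 0 < re (conj a * A)) (x y : H)
    (h : 0 ≤ re (@inner 𝕜 _ _ (A • y - x) (x - a • y))) :
    ‖x‖ * ‖y‖ ≤
        1 / 2 * re (A * conj (@inner 𝕜 _ _ y x) + conj a * @inner 𝕜 _ _ y x) /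
          Real.sqrt (re (conj a * A)) ∧
      1 / 2 * re (A * conj (@inner 𝕜 _ _ y x) + conj a * @inner 𝕜 _ _ y x) /
          Real.sqrt (re (conj a * A)) ≤
        1 / 2 * ((‖A‖ + ‖a‖) / Real.sqrt (re (conj a * A))) * ‖@inner 𝕜 _ _ y x‖ :=
  reverse_schwarz_inequality_general a A ha x y h
end

section
/- Let H be an inner product space over 𝕜 (𝕜 = ℝ or ℂ) containing a nonzero vector, and let c > 0 be a constant such that for all a, A ∈ 𝕜 with Re(conj(a)·A) > 0 and all x, y ∈ H with Re⟨A·y − x, x − a·y⟩ ≥ 0 one has ‖x‖·‖y‖ ≤ c·Re[A·conj(⟨x,y⟩) + conj(a)·⟨x,y⟩] / (Re(conj(a)·A))^(1/2). Then c ≥ 1/2 (i.e., the constant 1/2 in the previous reverse Schwarz inequality is sharp). -/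
open RCLike ComplexConjugate

section

variable {𝕜 H : Type*} [RCLike 𝕜] [SeminormedAddCommGroup H] [InnerProductSpace 𝕜 H]

lemma re_mul_conj_add_conj_mul (a w : 𝕜) :
    re (a * conj w + conj a * w) = 2 * re (conj a * w) := by
  have conj_eq : a * conj w = conj (conj a * w) := by simp
  rw [conj_eq, map_add, conj_re, two_mul]

lemma re_conj_mul_inner_smul_right (a : 𝕜) (y : H) :
    re (conj a * inner 𝕜 y (a • y)) = ‖a • y‖ ^ 2 := by
  rw [← inner_smul_left, inner_self_eq_norm_sq]

lemma sqrt_re_conj_mul_self (a : 𝕜) : √(re (conj a * a)) = ‖a‖ := by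
  rw [RCLike.conj_mul, ← ofReal_pow, ofReal_re, Real.sqrt_sq (norm_nonneg a)]

/-- For `A = a` the vector `x = a • y` is admissible, and there the reverse Schwarz inequality
with constant `1 / 2` is an equality. -/
theorem reverse_schwarz_constant_sharp_general {a : 𝕜} (ha : a ≠ 0) (hH : ∃ z : H, ‖z‖ ≠ 0)
    (c : ℝ)
    (h : ∀ x y : H, 0 ≤ re (inner 𝕜 (a • y - x) (x - a • y)) →
      ‖x‖ * ‖y‖ ≤
        c * re (a * conj (inner 𝕜 y x) + conj a * inner 𝕜 y x) / √(re (conj a * a))) :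
    1 / 2 ≤ c := by
  obtain ⟨z, hz⟩ := hH
  have norm_mul_norm_pos : 0 < ‖a • z‖ * ‖z‖ := by
    rw [norm_smul]
    positivity
  have bound : ‖a • z‖ * ‖z‖ ≤ 2 * c * (‖a • z‖ * ‖z‖) := by
    calc ‖a • z‖ * ‖z‖
        ≤ c * re (a * conj (inner 𝕜 z (a • z)) + conj a * inner 𝕜 z (a • z)) /
            √(re (conj a * a)) := h (a • z) z (by simp)
      _ = c * (2 * ‖a • z‖ ^ 2) / ‖a‖ := by
        rw [re_mul_conj_add_conj_mul, re_conj_mul_inner_smul_right, sqrt_re_conj_mul_self]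
      _ = 2 * c * (‖a • z‖ * ‖z‖) := by
        rw [norm_smul]
        field_simp
  have one_le : 1 ≤ 2 * c := (le_mul_iff_one_le_left norm_mul_norm_pos).mp bound
  linarith

end

/-- Sharpness of the constant `1/2` in the reverse Schwarz inequality of Theorem 2.1.
The inner product `⟪·,·⟫` is Mathlib's (conjugate-linear in the first variable), so the
paper's `⟨x,y⟩` is written as `inner y x`. -/
theorem reverse_schwarz_constant_sharp {𝕜 H : Type*} [RCLike 𝕜] [NormedAddCommGroup H]
    [InnerProductSpace 𝕜 H] (hH : ∃ z : H, z ≠ 0) (c : ℝ) (hc : 0 < c)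
    (h : ∀ (a A : 𝕜) (x y : H), 0 < re (conj a * A) →
      0 ≤ re (@inner 𝕜 _ _ (A • y - x) (x - a • y)) →
      ‖x‖ * ‖y‖ ≤
        c * re (A * conj (@inner 𝕜 _ _ y x) + conj a * @inner 𝕜 _ _ y x) /
          Real.sqrt (re (conj a * A))) :
    1 / 2 ≤ c :=
  reverse_schwarz_constant_sharp_general (a := (1 : 𝕜)) one_ne_zero
    (hH.imp fun _ => norm_ne_zero_iff.mpr) c fun x y => h 1 1 x y (by simp)
end

section
/- Let H be an inner product space over 𝕜 (𝕜 = ℝ or ℂ) and let m, M > 0 be real numbers. If x, y ∈ H satisfy Re⟨M·y − x, x − m·y⟩ ≥ 0, then 0 ≤ ‖x‖·‖y‖ − |⟨x,y⟩| ≤ ‖x‖·‖y‖ − Re⟨x,y⟩ ≤ (√M − √m)²/(2√(m·M)) · Re⟨x,y⟩ ≤ (√M − √m)²/(2√(m·M)) · |⟨x,y⟩|. -/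
open RCLike

/-!
Expanding `re ⟨M y - x, x - m y⟩ ≥ 0` gives `‖x‖² + m M ‖y‖² ≤ (m + M) re ⟨x, y⟩`, and by AM-GM
the left side is at least `2 √(m M) ‖x‖ ‖y‖`. Subtracting `2 √(m M) re ⟨x, y⟩` from both sides
leaves the factor `m + M - 2 √(m M) = (√M - √m)²` on the right.
-/

lemma sq_sqrt_sub_sqrt {a b : ℝ} (ha : 0 ≤ a) (hb : 0 ≤ b) :
    (√a - √b) ^ 2 = a + b - 2 * √(a * b) := by
  rw [sub_sq, Real.sq_sqrt ha, Real.sq_sqrt hb, Real.sqrt_mul ha]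
  ring

section Cassels

variable {𝕜 E : Type*} [RCLike 𝕜] [SeminormedAddCommGroup E] [InnerProductSpace 𝕜 E]

lemma re_inner_smul_sub_sub_smul_s3 (m M : ℝ) (x y : E) :
    re (inner 𝕜 ((M : 𝕜) • y - x) (x - (m : 𝕜) • y)) =
      (m + M) * re (inner 𝕜 y x) - (‖x‖ ^ 2 + m * M * ‖y‖ ^ 2) := by
  simp only [inner_sub_left, inner_sub_right, inner_smul_left, inner_smul_right, conj_ofReal,
    map_sub, re_ofReal_mul, inner_re_symm x y, inner_self_eq_norm_sq]
  ring

lemma two_mul_sqrt_mul_norm_mul_norm_le {m M : ℝ} (hmM : 0 ≤ m * M) {x y : E}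
    (h : 0 ≤ re (inner 𝕜 ((M : 𝕜) • y - x) (x - (m : 𝕜) • y))) :
    2 * √(m * M) * (‖x‖ * ‖y‖) ≤ (m + M) * re (inner 𝕜 y x) :=
  calc
    2 * √(m * M) * (‖x‖ * ‖y‖) = 2 * ‖x‖ * (√(m * M) * ‖y‖) := by ring
    _ ≤ ‖x‖ ^ 2 + (√(m * M) * ‖y‖) ^ 2 := two_mul_le_add_sq _ _
    _ = ‖x‖ ^ 2 + m * M * ‖y‖ ^ 2 := by rw [mul_pow, Real.sq_sqrt hmM]
    _ ≤ (m + M) * re (inner 𝕜 y x) := by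
      rwa [re_inner_smul_sub_sub_smul_s3, sub_nonneg] at h

lemma norm_mul_norm_sub_re_inner_le {m M : ℝ} (hm : 0 < m) (hM : 0 < M) {x y : E}
    (h : 0 ≤ re (inner 𝕜 ((M : 𝕜) • y - x) (x - (m : 𝕜) • y))) :
    ‖x‖ * ‖y‖ - re (inner 𝕜 y x) ≤
      (√M - √m) ^ 2 / (2 * √(m * M)) * re (inner 𝕜 y x) := by
  have hmM : 0 < m * M := mul_pos hm hM
  have cassels := two_mul_sqrt_mul_norm_mul_norm_le hmM.le h
  rw [div_mul_eq_mul_div, le_div_iff₀ (by positivity), sq_sqrt_sub_sqrt hM.le hm.le, mul_comm M m]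
  linarith

theorem cassels_inner_product_additive_general {m M : ℝ} (hm : 0 < m) (hM : 0 < M) {x y : E}
    (h : 0 ≤ re (inner 𝕜 ((M : 𝕜) • y - x) (x - (m : 𝕜) • y))) :
    0 ≤ ‖x‖ * ‖y‖ - ‖inner 𝕜 y x‖ ∧
      ‖x‖ * ‖y‖ - ‖inner 𝕜 y x‖ ≤ ‖x‖ * ‖y‖ - re (inner 𝕜 y x) ∧
      ‖x‖ * ‖y‖ - re (inner 𝕜 y x) ≤
        (√M - √m) ^ 2 / (2 * √(m * M)) * re (inner 𝕜 y x) ∧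
      (√M - √m) ^ 2 / (2 * √(m * M)) * re (inner 𝕜 y x) ≤
        (√M - √m) ^ 2 / (2 * √(m * M)) * ‖inner 𝕜 y x‖ := by
  have cauchy_schwarz : ‖inner 𝕜 y x‖ ≤ ‖x‖ * ‖y‖ :=
    (norm_inner_le_norm y x).trans_eq (mul_comm _ _)
  have re_le : re (inner 𝕜 y x) ≤ ‖inner 𝕜 y x‖ := re_le_norm _
  exact ⟨sub_nonneg.2 cauchy_schwarz, sub_le_sub_left re_le _,
    norm_mul_norm_sub_re_inner_le hm hM h, mul_le_mul_of_nonneg_left re_le (by positivity)⟩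

end Cassels

/-- Corollary 2.3, inequality (2.8).  The inner product is Mathlib's
(conjugate-linear in the first variable), so the paper's `⟨x,y⟩` is written as
`inner y x`. -/
theorem cassels_inner_product_additive {𝕜 H : Type*} [RCLike 𝕜] [NormedAddCommGroup H]
    [InnerProductSpace 𝕜 H] (m M : ℝ) (hm : 0 < m) (hM : 0 < M) (x y : H)
    (h : 0 ≤ re (@inner 𝕜 _ _ ((M : 𝕜) • y - x) (x - (m : 𝕜) • y))) :
    0 ≤ ‖x‖ * ‖y‖ - ‖@inner 𝕜 _ _ y x‖ ∧
      ‖x‖ * ‖y‖ - ‖@inner 𝕜 _ _ y x‖ ≤ ‖x‖ * ‖y‖ - re (@inner 𝕜 _ _ y x) ∧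
      ‖x‖ * ‖y‖ - re (@inner 𝕜 _ _ y x) ≤
        (Real.sqrt M - Real.sqrt m) ^ 2 / (2 * Real.sqrt (m * M)) * re (@inner 𝕜 _ _ y x) ∧
      (Real.sqrt M - Real.sqrt m) ^ 2 / (2 * Real.sqrt (m * M)) * re (@inner 𝕜 _ _ y x) ≤
        (Real.sqrt M - Real.sqrt m) ^ 2 / (2 * Real.sqrt (m * M)) * ‖@inner 𝕜 _ _ y x‖ :=
  cassels_inner_product_additive_general hm hM h
end

section
/- (Cassels' inequality) Let n ≥ 1, let a = (a₁,…,aₙ) and b = (b₁,…,bₙ) be sequences of positive real numbers, and let w = (w₁,…,wₙ) be a sequence of nonnegative real numbers. Set m = min over i of aᵢ/bᵢ and M = max over i of aᵢ/bᵢ. Then (Σᵢ wᵢ·aᵢ²)·(Σᵢ wᵢ·bᵢ²) ≤ (m + M)²/(4·m·M) · (Σᵢ wᵢ·aᵢ·bᵢ)². -/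
/-!
Write `A`, `B`, `C` for the weighted sums of `aᵢ²`, `bᵢ²`, `aᵢbᵢ`. Since `aᵢ` lies between `m bᵢ`
and `M bᵢ`, the sum of `wᵢ (aᵢ - m bᵢ) (M bᵢ - aᵢ)` is nonnegative, which expands to
`A + m M B ≤ (m + M) C`. By AM-GM the square of the left-hand side is at least `4 m M A B`.
-/

section WeightedSums

variable {ι R : Type*} {s : Finset ι} {a b w : ι → R} {m M : R}

theorem diaz_metcalf_inequality [CommRing R] [LinearOrder R] [IsStrictOrderedRing R]
    (hw : ∀ i ∈ s, 0 ≤ w i) (hm : ∀ i ∈ s, m * b i ≤ a i) (hM : ∀ i ∈ s, a i ≤ M * b i) :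
    ∑ i ∈ s, w i * a i ^ 2 + m * M * ∑ i ∈ s, w i * b i ^ 2 ≤
      (m + M) * ∑ i ∈ s, w i * a i * b i := by
  rw [Finset.mul_sum, Finset.mul_sum, ← Finset.sum_add_distrib]
  refine Finset.sum_le_sum fun i hi ↦ ?_
  have hterm : 0 ≤ w i * ((a i - m * b i) * (M * b i - a i)) :=
    mul_nonneg (hw i hi) (mul_nonneg (sub_nonneg.2 (hm i hi)) (sub_nonneg.2 (hM i hi)))
  linear_combination hterm

theorem cassels_inequality_general [Field R] [LinearOrder R] [IsStrictOrderedRing R]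
    (hw : ∀ i ∈ s, 0 ≤ w i) (hm : ∀ i ∈ s, m * b i ≤ a i) (hM : ∀ i ∈ s, a i ≤ M * b i)
    (hmM : 0 < m * M) :
    (∑ i ∈ s, w i * a i ^ 2) * (∑ i ∈ s, w i * b i ^ 2) ≤
      (m + M) ^ 2 / (4 * m * M) * (∑ i ∈ s, w i * a i * b i) ^ 2 := by
  have sum_sq_nonneg (c : ι → R) : 0 ≤ ∑ i ∈ s, w i * c i ^ 2 :=
    Finset.sum_nonneg fun i hi ↦ mul_nonneg (hw i hi) (sq_nonneg (c i))
  have left_nonneg : 0 ≤ ∑ i ∈ s, w i * a i ^ 2 + m * M * ∑ i ∈ s, w i * b i ^ 2 :=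
    add_nonneg (sum_sq_nonneg a) (mul_nonneg hmM.le (sum_sq_nonneg b))
  rw [div_mul_eq_mul_div, le_div_iff₀ (by linarith)]
  calc (∑ i ∈ s, w i * a i ^ 2) * (∑ i ∈ s, w i * b i ^ 2) * (4 * m * M)
      = 4 * (∑ i ∈ s, w i * a i ^ 2) * (m * M * ∑ i ∈ s, w i * b i ^ 2) := by ring
    _ ≤ (∑ i ∈ s, w i * a i ^ 2 + m * M * ∑ i ∈ s, w i * b i ^ 2) ^ 2 :=
      four_mul_le_sq_add _ _
    _ ≤ ((m + M) * ∑ i ∈ s, w i * a i * b i) ^ 2 :=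
      pow_le_pow_left₀ left_nonneg (diaz_metcalf_inequality hw hm hM) 2
    _ = (m + M) ^ 2 * (∑ i ∈ s, w i * a i * b i) ^ 2 := mul_pow _ _ 2

end WeightedSums

section ExtremalRatios

variable {ι K : Type*} [Field K] [ConditionallyCompleteLinearOrder K] [IsStrictOrderedRing K]
  {a b : ι → K}

theorem iInf_div_mul_le (h : BddBelow (Set.range fun j ↦ a j / b j)) {i : ι} (hb : 0 < b i) :
    (⨅ j, a j / b j) * b i ≤ a i :=
  (le_div_iff₀ hb).1 (ciInf_le h i)

theorem le_iSup_div_mul (h : BddAbove (Set.range fun j ↦ a j / b j)) {i : ι} (hb : 0 < b i) :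
    a i ≤ (⨆ j, a j / b j) * b i :=
  (div_le_iff₀ hb).1 (le_ciSup h i)

theorem iInf_div_mul_iSup_div_pos [Finite ι] [Nonempty ι]
    (ha : ∀ i, 0 < a i) (hb : ∀ i, 0 < b i) :
    0 < (⨅ i, a i / b i) * ⨆ i, a i / b i := by
  obtain ⟨i, hi⟩ := exists_eq_ciInf_of_finite (f := fun i ↦ a i / b i)
  obtain ⟨j, hj⟩ := exists_eq_ciSup_of_finite (f := fun i ↦ a i / b i)
  rw [← hi, ← hj]
  exact mul_pos (div_pos (ha i) (hb i)) (div_pos (ha j) (hb j))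

end ExtremalRatios

/-- Theorem 1.1 (Cassels' inequality). -/
theorem cassels_inequality (n : ℕ) (hn : 1 ≤ n) (a b w : Fin n → ℝ)
    (ha : ∀ i, 0 < a i) (hb : ∀ i, 0 < b i) (hw : ∀ i, 0 ≤ w i)
    (m M : ℝ) (hm : m = ⨅ i, a i / b i) (hM : M = ⨆ i, a i / b i) :
    (∑ i, w i * a i ^ 2) * (∑ i, w i * b i ^ 2) ≤
      (m + M) ^ 2 / (4 * m * M) * (∑ i, w i * a i * b i) ^ 2 := by
  have : Nonempty (Fin n) := ⟨⟨0, hn⟩⟩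
  subst hm hM
  exact cassels_inequality_general (fun i _ ↦ hw i)
    (fun i _ ↦ iInf_div_mul_le (Set.finite_range _).bddBelow (hb i))
    (fun i _ ↦ le_iSup_div_mul (Set.finite_range _).bddAbove (hb i))
    (iInf_div_mul_iSup_div_pos ha hb)
end

section
/- (Pólya–Szegő inequality) Let n ≥ 1, let (a₁,…,aₙ), (b₁,…,bₙ) be real sequences, and let 0 < a ≤ A and 0 < b ≤ B be real constants such that a ≤ aᵢ ≤ A and b ≤ bᵢ ≤ B for each i. Then (Σᵢ aᵢ²)·(Σᵢ bᵢ²) ≤ (a·b + A·B)²/(4·a·b·A·B) · (Σᵢ aᵢ·bᵢ)². -/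
/-!
If the ratios `f i / g i` lie between `a / B` and `A / b`, then each product
`(f i * B - a * g i) * (A * g i - f i * b)` is nonnegative. Summing over `i` gives the
Diaz–Metcalf inequality `b B ∑ f² + a A ∑ g² ≤ (a b + A B) ∑ f g`, and AM-GM on its left-hand side
turns the sum of the two terms into their product.
-/

section OrderedRing

variable {ι R : Type*} [CommRing R] [LinearOrder R] [IsStrictOrderedRing R]
  {s : Finset ι} {f g : ι → R} {a A b B : R}

theorem mul_sum_sq_add_mul_sum_sq_le_mul_sum_mul
    (hlower : ∀ i ∈ s, a * g i ≤ f i * B) (hupper : ∀ i ∈ s, f i * b ≤ A * g i) :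
    b * B * ∑ i ∈ s, f i ^ 2 + a * A * ∑ i ∈ s, g i ^ 2 ≤
      (a * b + A * B) * ∑ i ∈ s, f i * g i := by
  simp only [Finset.mul_sum, ← Finset.sum_add_distrib]
  refine Finset.sum_le_sum fun i hi ↦ ?_
  have hprod : 0 ≤ (f i * B - a * g i) * (A * g i - f i * b) :=
    mul_nonneg (sub_nonneg.2 (hlower i hi)) (sub_nonneg.2 (hupper i hi))
  linear_combination hprod

theorem four_mul_sum_sq_mul_sum_sq_le_sq_mul_sum_mul_sq (haA : 0 ≤ a * A) (hbB : 0 ≤ b * B)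
    (hlower : ∀ i ∈ s, a * g i ≤ f i * B) (hupper : ∀ i ∈ s, f i * b ≤ A * g i) :
    4 * a * b * A * B * ((∑ i ∈ s, f i ^ 2) * ∑ i ∈ s, g i ^ 2) ≤
      (a * b + A * B) ^ 2 * (∑ i ∈ s, f i * g i) ^ 2 := by
  have hf : 0 ≤ b * B * ∑ i ∈ s, f i ^ 2 :=
    mul_nonneg hbB (Finset.sum_nonneg fun i _ ↦ sq_nonneg (f i))
  have hg : 0 ≤ a * A * ∑ i ∈ s, g i ^ 2 :=
    mul_nonneg haA (Finset.sum_nonneg fun i _ ↦ sq_nonneg (g i))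
  calc 4 * a * b * A * B * ((∑ i ∈ s, f i ^ 2) * ∑ i ∈ s, g i ^ 2)
      = 4 * (b * B * ∑ i ∈ s, f i ^ 2) * (a * A * ∑ i ∈ s, g i ^ 2) := by ring
    _ ≤ (b * B * ∑ i ∈ s, f i ^ 2 + a * A * ∑ i ∈ s, g i ^ 2) ^ 2 := four_mul_le_sq_add _ _
    _ ≤ ((a * b + A * B) * ∑ i ∈ s, f i * g i) ^ 2 :=
      pow_le_pow_left₀ (add_nonneg hf hg)
        (mul_sum_sq_add_mul_sum_sq_le_mul_sum_mul hlower hupper) 2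
    _ = (a * b + A * B) ^ 2 * (∑ i ∈ s, f i * g i) ^ 2 := mul_pow _ _ 2

end OrderedRing

theorem polya_szego_inequality_general {ι K : Type*} [Field K] [LinearOrder K]
    [IsStrictOrderedRing K] {s : Finset ι} {f g : ι → K} {a A b B : K}
    (haA : 0 < a * A) (hbB : 0 < b * B)
    (hlower : ∀ i ∈ s, a * g i ≤ f i * B) (hupper : ∀ i ∈ s, f i * b ≤ A * g i) :
    (∑ i ∈ s, f i ^ 2) * (∑ i ∈ s, g i ^ 2) ≤
      (a * b + A * B) ^ 2 / (4 * a * b * A * B) * (∑ i ∈ s, f i * g i) ^ 2 := by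
  have hden : 0 < 4 * a * b * A * B := by linear_combination 4 * mul_pos haA hbB
  rw [div_mul_eq_mul_div, le_div_iff₀' hden]
  exact four_mul_sum_sq_mul_sum_sq_le_sq_mul_sum_mul_sq haA.le hbB.le hlower hupper

/-- Inequality (1.5) (Pólya–Szegő's inequality). -/
theorem polya_szego_inequality (n : ℕ) (hn : 1 ≤ n) (a' b' : Fin n → ℝ)
    (a A b B : ℝ) (ha : 0 < a) (haA : a ≤ A) (hb : 0 < b) (hbB : b ≤ B)
    (h1 : ∀ i, a ≤ a' i ∧ a' i ≤ A) (h2 : ∀ i, b ≤ b' i ∧ b' i ≤ B) :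
    (∑ i, a' i ^ 2) * (∑ i, b' i ^ 2) ≤
      (a * b + A * B) ^ 2 / (4 * a * b * A * B) * (∑ i, a' i * b' i) ^ 2 := by
  have hA : 0 < A := ha.trans_le haA
  have hB : 0 < B := hb.trans_le hbB
  exact polya_szego_inequality_general (mul_pos ha hA) (mul_pos hb hB)
    (fun i _ ↦ mul_le_mul (h1 i).1 (h2 i).2 (hb.le.trans (h2 i).1) (ha.le.trans (h1 i).1))
    (fun i _ ↦ mul_le_mul (h1 i).2 (h2 i).1 hb.le hA.le)
end

section
/- (Niculescu's inequality) Let E be an inner product space over 𝕜 (𝕜 = ℝ or ℂ), let x, y ∈ E and let ω, Ω > 0 be real numbers such that Re⟨x − ω·y, x − Ω·y⟩ ≤ 0. Then (√(ω/Ω) + √(Ω/ω)) · Re⟨x,y⟩ ≥ 2·‖x‖·‖y‖. -/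
open RCLike

/-!
Expanding the inner product turns the hypothesis into
`‖x‖ ^ 2 + ω * Ω * ‖y‖ ^ 2 ≤ (ω + Ω) * re ⟪y, x⟫`, and by AM-GM the left-hand side is at least
`2 * √(ω * Ω) * (‖x‖ * ‖y‖)`. For scalars `a b : 𝕜` the same argument works with `re (conj a * b)`
in place of `ω * Ω`.
-/

open scoped ComplexConjugate InnerProductSpace

theorem sqrt_div_add_sqrt_div {a b : ℝ} (ha : 0 < a) (hb : 0 < b) :
    √(a / b) + √(b / a) = (a + b) / √(a * b) := by
  rw [Real.sqrt_div ha.le, Real.sqrt_div hb.le, Real.sqrt_mul ha.le,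
    div_add_div _ _ (Real.sqrt_pos.2 hb).ne' (Real.sqrt_pos.2 ha).ne',
    Real.mul_self_sqrt ha.le, Real.mul_self_sqrt hb.le, mul_comm √b]

section SeminormedInnerProductSpace

variable {𝕜 E : Type*} [RCLike 𝕜] [SeminormedAddCommGroup E] [InnerProductSpace 𝕜 E]

theorem re_inner_sub_smul_sub_smul (x y : E) (a b : 𝕜) :
    re ⟪x - a • y, x - b • y⟫_𝕜 =
      ‖x‖ ^ 2 + re (conj a * b) * ‖y‖ ^ 2 - re ⟪(a + b) • y, x⟫_𝕜 := by
  have cross : re ⟪x, b • y⟫_𝕜 = re ⟪b • y, x⟫_𝕜 := inner_re_symm x (b • y)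
  have square : re ⟪a • y, b • y⟫_𝕜 = re (conj a * b) * ‖y‖ ^ 2 := by
    rw [inner_smul_left, inner_smul_right, ← mul_assoc, inner_self_eq_norm_sq_to_K, ← ofReal_pow,
      re_mul_ofReal]
  simp only [inner_sub_left, inner_sub_right, add_smul, inner_add_left, map_sub, map_add,
    inner_self_eq_norm_sq, cross, square]
  ring

theorem niculescu_inequality_general (x y : E) {a b : 𝕜} (hab : 0 ≤ re (conj a * b))
    (h : re ⟪x - a • y, x - b • y⟫_𝕜 ≤ 0) :
    2 * (‖x‖ * ‖y‖) * √(re (conj a * b)) ≤ re ⟪(a + b) • y, x⟫_𝕜 := by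
  calc 2 * (‖x‖ * ‖y‖) * √(re (conj a * b))
      = 2 * ‖x‖ * (√(re (conj a * b)) * ‖y‖) := by ring
    _ ≤ ‖x‖ ^ 2 + (√(re (conj a * b)) * ‖y‖) ^ 2 := two_mul_le_add_sq _ _
    _ = ‖x‖ ^ 2 + re (conj a * b) * ‖y‖ ^ 2 := by rw [mul_pow, Real.sq_sqrt hab]
    _ ≤ re ⟪(a + b) • y, x⟫_𝕜 := by rwa [re_inner_sub_smul_sub_smul, sub_nonpos] at h

end SeminormedInnerProductSpace

/-- Theorem 1.2 (Niculescu's inequality).  The inner product is Mathlib's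
(conjugate-linear in the first variable); since only real parts appear this
agrees with the paper's convention. -/
theorem niculescu_inequality {𝕜 E : Type*} [RCLike 𝕜] [NormedAddCommGroup E]
    [InnerProductSpace 𝕜 E] (x y : E) (ω Ω : ℝ) (hω : 0 < ω) (hΩ : 0 < Ω)
    (h : re (@inner 𝕜 _ _ (x - (ω : 𝕜) • y) (x - (Ω : 𝕜) • y)) ≤ 0) :
    2 * (‖x‖ * ‖y‖) ≤ (Real.sqrt (ω / Ω) + Real.sqrt (Ω / ω)) * re (@inner 𝕜 _ _ y x) := by
  rw [sqrt_div_add_sqrt_div hω hΩ, div_mul_eq_mul_div, le_div_iff₀ (by positivity)]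
  simpa [add_smul, inner_add_left, inner_smul_left, add_mul] using
    niculescu_inequality_general x y (by simpa using (mul_pos hω hΩ).le) h
end

section
/- Let T be a set and A : (T → ℝ) → ℝ a functional that is linear (A(α·f + β·g) = α·A(f) + β·A(g) for all α, β ∈ ℝ and f, g) and isotonic (f(t) ≥ g(t) for all t ∈ T implies A(f) ≥ A(g)). Let f, g, h : T → ℝ with h ≥ 0 and A(h) > 0, and suppose m, M > 0 satisfy m·g(t) ≤ f(t) ≤ M·g(t) for all t ∈ T. Then A(f·g·h)² ≤ A(f²·h)·A(g²·h) ≤ (M + m)²/(4·m·M) · A(f·g·h)². -/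
/-!
The map `(u, v) ↦ A (u * v * h)` is a positive semidefinite symmetric bilinear form `B`, so the left
inequality is Cauchy–Schwarz. Since `(f - m g) (M g - f) ≥ 0`, also `B (f - m g) (M g - f) ≥ 0`,
that is, `B f f + m M B g g ≤ (M + m) B f g` (the Diaz–Metcalf inequality). By AM-GM the square of
the left-hand side is at least `4 m M B f f * B g g`, which gives the right inequality.
-/

open LinearMap (BilinForm)

section BilinForm

variable {R E : Type*} [CommRing R] [AddCommGroup E] [Module R E] {B : BilinForm R E} {m M : R}
  {x y : E}

theorem apply_self_add_mul_apply_self_le [PartialOrder R] [IsOrderedAddMonoid R] (hB : B.IsSymm)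
    (hxy : 0 ≤ B (x - m • y) (M • y - x)) :
    B x x + m * M * B y y ≤ (M + m) * B x y := by
  have expand : B (x - m • y) (M • y - x) = (M + m) * B x y - (B x x + m * M * B y y) := by
    simp only [map_sub, map_smul, LinearMap.sub_apply, LinearMap.smul_apply, smul_eq_mul,
      hB.eq y x]
    ring
  rwa [expand, sub_nonneg] at hxy

theorem four_mul_apply_self_mul_apply_self_le [LinearOrder R] [IsStrictOrderedRing R]
    (hB : B.IsPosSemidef) (hmM : 0 ≤ m * M) (hxy : 0 ≤ B (x - m • y) (M • y - x)) :
    4 * (m * M) * (B x x * B y y) ≤ (M + m) ^ 2 * B x y ^ 2 := by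
  have hx : 0 ≤ B x x := hB.nonneg x
  have hy : 0 ≤ B y y := hB.nonneg y
  calc
    4 * (m * M) * (B x x * B y y) = 4 * B x x * (m * M * B y y) := by ring
    _ ≤ (B x x + m * M * B y y) ^ 2 := four_mul_le_sq_add _ _
    _ ≤ ((M + m) * B x y) ^ 2 :=
      pow_le_pow_left₀ (add_nonneg hx (mul_nonneg hmM hy))
        (apply_self_add_mul_apply_self_le hB.isSymm hxy) 2
    _ = (M + m) ^ 2 * B x y ^ 2 := mul_pow _ _ 2

end BilinForm

section WeightedForm

variable {R S : Type*} [CommSemiring R] [CommSemiring S] [Algebra R S]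

/-- The bilinear form `(u, v) ↦ φ (u * v * h)` on a commutative algebra attached to a linear
functional `φ` and a weight `h`. -/
def weightedForm (φ : S →ₗ[R] R) (h : S) : BilinForm R S :=
  (LinearMap.mul R S).compr₂ (φ ∘ₗ LinearMap.mulRight R h)

@[simp]
theorem weightedForm_apply (φ : S →ₗ[R] R) (h u v : S) :
    weightedForm φ h u v = φ (u * v * h) :=
  rfl

theorem weightedForm_isPosSemidef [PartialOrder R] [PartialOrder S] [PosMulMono S]
    (φ : S →ₚ[R] R) (hsq : ∀ u : S, 0 ≤ u ^ 2) {h : S} (hh : 0 ≤ h) :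
    (weightedForm φ.toLinearMap h).IsPosSemidef where
  eq u v := by simp [mul_comm u v]
  nonneg u := φ.map_nonneg (mul_nonneg ((hsq u).trans_eq (sq u)) hh)

end WeightedForm

/-- An isotonic map preserving linear combinations of two vectors, bundled as a positive linear
map. -/
def positiveLinearMapOfIsotonic {R E F : Type*} [Semiring R] [AddCommMonoid E] [PartialOrder E]
    [AddCommMonoid F] [PartialOrder F] [Module R E] [Module R F] (A : E → F)
    (hlin : ∀ (a b : R) (x y : E), A (a • x + b • y) = a • A x + b • A y) (hA : Monotone A) :
    E →ₚ[R] F where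
  toFun := A
  map_add' x y := by simpa using hlin 1 1 x y
  map_smul' a x := by simpa using hlin a 0 x x
  monotone' := hA

theorem isotonic_functional_cassels_general {K S : Type*} [Field K] [LinearOrder K]
    [IsStrictOrderedRing K] [CommRing S] [PartialOrder S] [IsOrderedRing S] [Algebra K S]
    (φ : S →ₚ[K] K) (hsq : ∀ u : S, 0 ≤ u ^ 2) {f g h : S} (hh : 0 ≤ h) {m M : K}
    (hmM : 0 < m * M) (hmf : m • g ≤ f) (hfM : f ≤ M • g) :
    φ (f * g * h) ^ 2 ≤ φ (f ^ 2 * h) * φ (g ^ 2 * h) ∧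
      φ (f ^ 2 * h) * φ (g ^ 2 * h) ≤ (M + m) ^ 2 / (4 * m * M) * φ (f * g * h) ^ 2 := by
  have hB := weightedForm_isPosSemidef φ hsq hh
  have hfg : 0 ≤ weightedForm φ.toLinearMap h (f - m • g) (M • g - f) :=
    φ.map_nonneg (mul_nonneg (mul_nonneg (sub_nonneg.2 hmf) (sub_nonneg.2 hfM)) hh)
  have cauchy_schwarz :=
    LinearMap.BilinForm.apply_sq_le_of_symm _ hB.nonneg (BilinForm.isSymm_iff.1 hB.isSymm) f g
  have cassels := four_mul_apply_self_mul_apply_self_le hB hmM.le hfg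
  simp only [weightedForm_apply, PositiveLinearMap.coe_toLinearMap, ← sq]
    at cauchy_schwarz cassels
  refine ⟨cauchy_schwarz, ?_⟩
  rwa [div_mul_eq_mul_div, mul_assoc 4, le_div_iff₀' (mul_pos four_pos hmM)]

/-- Proposition 3.1: reverse Cauchy–Schwarz for isotonic linear functionals. -/
theorem isotonic_functional_cassels {T : Type*} (A : (T → ℝ) → ℝ)
    (hlin : ∀ (α β : ℝ) (f g : T → ℝ), A (fun t => α * f t + β * g t) = α * A f + β * A g)
    (hiso : ∀ f g : T → ℝ, (∀ t, g t ≤ f t) → A g ≤ A f)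
    (f g h : T → ℝ) (hh : ∀ t, 0 ≤ h t) (hAh : 0 < A h)
    (m M : ℝ) (hm : 0 < m) (hM : 0 < M)
    (hfg : ∀ t, m * g t ≤ f t ∧ f t ≤ M * g t) :
    A (fun t => f t * g t * h t) ^ 2 ≤
        A (fun t => f t ^ 2 * h t) * A (fun t => g t ^ 2 * h t) ∧
      A (fun t => f t ^ 2 * h t) * A (fun t => g t ^ 2 * h t) ≤
        (M + m) ^ 2 / (4 * m * M) * A (fun t => f t * g t * h t) ^ 2 := by
  exact isotonic_functional_cassels_general
    (positiveLinearMapOfIsotonic A hlin fun u v huv => hiso v u huv)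
    (fun u t => sq_nonneg (u t)) hh (mul_pos hm hM) (fun t => (hfg t).1) (fun t => (hfg t).2)
end

section
/- Let T be a set and A : (T → ℝ) → ℝ a functional that is linear (A(α·f + β·g) = α·A(f) + β·A(g) for all α, β ∈ ℝ and f, g) and isotonic (f(t) ≥ g(t) for all t ∈ T implies A(f) ≥ A(g)). Let f, g, h : T → ℝ with h ≥ 0 and A(h) > 0, and suppose m, M > 0 satisfy m·g(t) ≤ f(t) ≤ M·g(t) for all t ∈ T. Then 0 ≤ √(A(f²·h)·A(g²·h)) − A(h·f·g) ≤ (√M − √m)²/(2√(m·M)) · A(h·f·g). -/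
/-!
The positive functional `A` and the weight `h` define a positive semidefinite form
`B u v = A (h * u * v)`. The lower bound is the Cauchy–Schwarz inequality for `B`. For the upper
bound, `h * (f - m * g) * (M * g - f)` is pointwise nonnegative, so `0 ≤ B (f - m • g) (M • g - f)`,
which expands to `B f f + m * M * B g g ≤ (m + M) * B f g`; the inequality between the arithmetic
and geometric means bounds the left-hand side below by `2 * √(m * M) * √(B f f * B g g)`.
-/

theorem add_div_two_mul_sqrt_mul_sub_one {m M : ℝ} (hm : 0 < m) (hM : 0 < M) :
    (m + M) / (2 * √(m * M)) - 1 = (√M - √m) ^ 2 / (2 * √(m * M)) := by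
  have hmM : 2 * √(m * M) ≠ 0 := by positivity
  rw [div_sub_one hmM, sub_sq, Real.sq_sqrt hm.le, Real.sq_sqrt hM.le, Real.sqrt_mul hm.le]
  ring

section ReverseCauchySchwarz

open LinearMap (BilinForm)

theorem bilinForm_self_add_mul_self_le {R V : Type*} [CommRing R] [PartialOrder R]
    [IsOrderedAddMonoid R] [AddCommGroup V] [Module R V] {B : BilinForm R V} (hB : B.IsSymm)
    {x y : V} {m M : R} (h : 0 ≤ B (x - m • y) (M • y - x)) :
    B x x + m * M * B y y ≤ (m + M) * B x y := by
  have expand : B (x - m • y) (M • y - x) =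
      (m + M) * B x y - (B x x + m * M * B y y) := by
    have symm : B y x = B x y := hB.eq y x
    simp only [map_sub, map_smul, LinearMap.sub_apply, LinearMap.smul_apply, smul_eq_mul, symm]
    ring
  exact sub_nonneg.1 (expand ▸ h)

variable {V : Type*} [AddCommGroup V] [Module ℝ V] {B : BilinForm ℝ V} {x y : V} {m M : ℝ}

theorem sqrt_bilinForm_self_mul_self_le (hB : B.IsPosSemidef) (hm : 0 < m) (hM : 0 < M)
    (h : 0 ≤ B (x - m • y) (M • y - x)) :
    √(B x x * B y y) ≤ (m + M) / (2 * √(m * M)) * B x y := by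
  have hx : 0 ≤ B x x := hB.nonneg x
  have hy : 0 ≤ B y y := hB.nonneg y
  have amgm : 2 * (√(m * M) * √(B x x * B y y)) ≤ B x x + m * M * B y y := by
    refine two_mul_le_add_of_sq_le_mul hx (by positivity) (le_of_eq ?_)
    rw [mul_pow, Real.sq_sqrt (by positivity), Real.sq_sqrt (by positivity)]
    ring
  rw [div_mul_eq_mul_div, le_div_iff₀ (by positivity)]
  calc √(B x x * B y y) * (2 * √(m * M))
      = 2 * (√(m * M) * √(B x x * B y y)) := by ring
    _ ≤ B x x + m * M * B y y := amgm
    _ ≤ (m + M) * B x y := bilinForm_self_add_mul_self_le hB.isSymm h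

theorem sqrt_bilinForm_self_mul_self_sub_le (hB : B.IsPosSemidef) (hm : 0 < m) (hM : 0 < M)
    (h : 0 ≤ B (x - m • y) (M • y - x)) :
    √(B x x * B y y) - B x y ≤ (√M - √m) ^ 2 / (2 * √(m * M)) * B x y := by
  rw [← add_div_two_mul_sqrt_mul_sub_one hm hM, sub_one_mul]
  exact sub_le_sub_right (sqrt_bilinForm_self_mul_self_le hB hm hM h) _

end ReverseCauchySchwarz

section WeightedBilinForm

/-- The bilinear form `(u, v) ↦ A (h * u * v)` attached to a linear functional `A` on an algebra
and a weight `h`; for `A` an integral this is the `L²` pairing with density `h`. -/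
def weightedBilinForm {𝕜 R : Type*} [CommSemiring 𝕜] [Semiring R] [Algebra 𝕜 R]
    (A : R →ₗ[𝕜] 𝕜) (h : R) : LinearMap.BilinForm 𝕜 R :=
  (LinearMap.mul 𝕜 R ∘ₗ LinearMap.mulLeft 𝕜 h).compr₂ A

theorem weightedBilinForm_apply {𝕜 R : Type*} [CommSemiring 𝕜] [Semiring R] [Algebra 𝕜 R]
    (A : R →ₗ[𝕜] 𝕜) (h u v : R) : weightedBilinForm A h u v = A (h * u * v) :=
  rfl

theorem weightedBilinForm_isSymm {𝕜 R : Type*} [CommSemiring 𝕜] [CommSemiring R] [Algebra 𝕜 R]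
    (A : R →ₗ[𝕜] 𝕜) (h : R) : (weightedBilinForm A h).IsSymm where
  eq u v := congrArg A (mul_right_comm h u v)

theorem weightedBilinForm_apply_nonneg {𝕜 R : Type*} [CommSemiring 𝕜] [PartialOrder 𝕜]
    [Semiring R] [PartialOrder R] [PosMulMono R] [Algebra 𝕜 R] (A : R →ₚ[𝕜] 𝕜) {h u v : R}
    (hh : 0 ≤ h) (huv : 0 ≤ u * v) : 0 ≤ weightedBilinForm A.toLinearMap h u v := by
  rw [weightedBilinForm_apply, mul_assoc]
  exact A.map_nonneg (mul_nonneg hh huv)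

theorem weightedBilinForm_isPosSemidef {T 𝕜 : Type*} [CommRing 𝕜] [LinearOrder 𝕜]
    [IsOrderedRing 𝕜] (A : (T → 𝕜) →ₚ[𝕜] 𝕜) {h : T → 𝕜} (hh : 0 ≤ h) :
    (weightedBilinForm A.toLinearMap h).IsPosSemidef where
  isSymm := weightedBilinForm_isSymm _ h
  nonneg u := weightedBilinForm_apply_nonneg A hh fun t ↦ mul_self_nonneg (u t)

end WeightedBilinForm

theorem isLinearMap_of_map_smul_add_smul {R V W : Type*} [Semiring R] [AddCommMonoid V]
    [AddCommMonoid W] [Module R V] [Module R W] {A : V → W}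
    (hA : ∀ (a b : R) (x y : V), A (a • x + b • y) = a • A x + b • A y) : IsLinearMap R A where
  map_add x y := by simpa only [one_smul] using hA 1 1 x y
  map_smul a x := by simpa only [zero_smul, add_zero] using hA a 0 x x

/-- Corollary 3.2, inequality (3.4). -/
theorem isotonic_functional_cassels_additive {T : Type*} (A : (T → ℝ) → ℝ)
    (hlin : ∀ (α β : ℝ) (f g : T → ℝ), A (fun t => α * f t + β * g t) = α * A f + β * A g)
    (hiso : ∀ f g : T → ℝ, (∀ t, g t ≤ f t) → A g ≤ A f)
    (f g h : T → ℝ) (hh : ∀ t, 0 ≤ h t) (hAh : 0 < A h)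
    (m M : ℝ) (hm : 0 < m) (hM : 0 < M)
    (hfg : ∀ t, m * g t ≤ f t ∧ f t ≤ M * g t) :
    0 ≤ Real.sqrt (A (fun t => f t ^ 2 * h t) * A (fun t => g t ^ 2 * h t)) -
        A (fun t => h t * f t * g t) ∧
      Real.sqrt (A (fun t => f t ^ 2 * h t) * A (fun t => g t ^ 2 * h t)) -
          A (fun t => h t * f t * g t) ≤
        (Real.sqrt M - Real.sqrt m) ^ 2 / (2 * Real.sqrt (m * M)) *
          A (fun t => h t * f t * g t) := by
  let L : (T → ℝ) →ₚ[ℝ] ℝ :=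
    ⟨(isLinearMap_of_map_smul_add_smul hlin).mk' A, fun u v huv ↦ hiso v u huv⟩
  let B := weightedBilinForm L.toLinearMap h
  have hB : B.IsPosSemidef := weightedBilinForm_isPosSemidef L hh
  have hcross : 0 ≤ B (f - m • g) (M • g - f) :=
    weightedBilinForm_apply_nonneg L hh fun t ↦
      mul_nonneg (sub_nonneg.2 (hfg t).1) (sub_nonneg.2 (hfg t).2)
  have cauchy_schwarz : B f g ^ 2 ≤ B f f * B g g :=
    B.apply_sq_le_of_symm hB.nonneg (LinearMap.BilinForm.isSymm_iff.1 hB.isSymm) f g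
  have hself (u : T → ℝ) : A (fun t ↦ u t ^ 2 * h t) = B u u :=
    congrArg A (funext fun t ↦ show u t ^ 2 * h t = h t * u t * u t by ring)
  have hfg_apply : A (fun t ↦ h t * f t * g t) = B f g := rfl
  rw [hself f, hself g, hfg_apply]
  exact ⟨sub_nonneg.2 (Real.le_sqrt_of_sq_le cauchy_schwarz),
    sqrt_bilinForm_self_mul_self_sub_le hB hm hM hcross⟩
end

section
/- Let (Ω, Σ, μ) be a measure space, ρ : Ω → [0, ∞) measurable, and 𝕜 = ℝ or ℂ. Let a, A ∈ 𝕜 with Re(conj(a)·A) > 0, and let f, g : Ω → 𝕜 be measurable with ∫ ρ(s)·|f(s)|² dμ(s) < ∞ and ∫ ρ(s)·|g(s)|² dμ(s) < ∞. If ∫ Re[(A·g(s) − f(s))·(conj(f(s)) − conj(a)·conj(g(s)))]·ρ(s) dμ(s) ≥ 0, then (∫ ρ·|f|² dμ · ∫ ρ·|g|² dμ)^(1/2) ≤ (1/2)·(∫ ρ(s)·Re[A·conj(f(s))·g(s) + conj(a)·f(s)·conj(g(s))] dμ(s)) / (Re(conj(a)·A))^(1/2) ≤ (1/2)·(|A|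 + |a|)/(Re(conj(a)·A))^(1/2) · |∫ ρ(s)·f(s)·conj(g(s)) dμ(s)|. -/
open RCLike ComplexConjugate MeasureTheory

/-!
Absorbing the weight into the measure turns the claim into one about two vectors `x`, `y` of `L²`.
There `0 ≤ re ⟪x - a • y, A • y - x⟫` expands to
`‖x‖² + re (conj a * A) * ‖y‖² ≤ re ⟪x, (A + a) • y⟫`, and by AM-GM the left side is at least
`2 * √(re (conj a * A)) * ‖x‖ * ‖y‖`; the second inequality is `re z ≤ ‖z‖`.
-/

open scoped InnerProductSpace

section InnerProductSpace

variable {𝕜 E : Type*} [RCLike 𝕜] [SeminormedAddCommGroup E] [InnerProductSpace 𝕜 E]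

lemma re_inner_add_smul (a A : 𝕜) (x y : E) :
    re ⟪x, (A + a) • y⟫_𝕜 = re (A * ⟪x, y⟫_𝕜 + conj a * ⟪y, x⟫_𝕜) := by
  have re_conj_mul : re (conj a * ⟪y, x⟫_𝕜) = re (a * ⟪x, y⟫_𝕜) := by
    rw [← inner_conj_symm y x, ← map_mul, conj_re]
  rw [inner_smul_right, add_mul, map_add, map_add, re_conj_mul]

lemma re_inner_add_smul_le (a A : 𝕜) (x y : E) :
    re ⟪x, (A + a) • y⟫_𝕜 ≤ (‖A‖ + ‖a‖) * ‖⟪y, x⟫_𝕜‖ :=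
  calc re ⟪x, (A + a) • y⟫_𝕜 ≤ ‖⟪x, (A + a) • y⟫_𝕜‖ := re_le_norm _
    _ = ‖A + a‖ * ‖⟪y, x⟫_𝕜‖ := by rw [inner_smul_right, norm_mul, norm_inner_symm]
    _ ≤ (‖A‖ + ‖a‖) * ‖⟪y, x⟫_𝕜‖ := by gcongr; exact norm_add_le A a

lemma re_inner_sub_smul_smul_sub (a A : 𝕜) (x y : E) :
    re ⟪x - a • y, A • y - x⟫_𝕜 =
      re ⟪x, (A + a) • y⟫_𝕜 - (‖x‖ ^ 2 + re (conj a * A) * ‖y‖ ^ 2) := by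
  have expand : ⟪x - a • y, A • y - x⟫_𝕜 =
      A * ⟪x, y⟫_𝕜 + conj a * ⟪y, x⟫_𝕜 - (⟪x, x⟫_𝕜 + conj a * A * ⟪y, y⟫_𝕜) := by
    simp only [inner_sub_left, inner_sub_right, inner_smul_left, inner_smul_right]
    ring
  rw [expand, re_inner_add_smul, inner_self_eq_norm_sq_to_K, inner_self_eq_norm_sq_to_K,
    map_sub, map_add re (_ ^ 2), ← ofReal_pow, ← ofReal_pow, ofReal_re, re_mul_ofReal]

theorem norm_mul_norm_le_re_inner_add_smul_div {a A : 𝕜} (ha : 0 < re (conj a * A)) {x y : E}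
    (h : 0 ≤ re ⟪x - a • y, A • y - x⟫_𝕜) :
    ‖x‖ * ‖y‖ ≤ 1 / 2 * re ⟪x, (A + a) • y⟫_𝕜 / √(re (conj a * A)) := by
  have am_gm := two_mul_le_add_sq ‖x‖ (√(re (conj a * A)) * ‖y‖)
  rw [mul_pow, Real.sq_sqrt ha.le] at am_gm
  rw [re_inner_sub_smul_smul_sub] at h
  rw [le_div_iff₀ (Real.sqrt_pos.2 ha)]
  linarith

end InnerProductSpace

section SquareIntegrable

lemma norm_toLp_eq_sqrt_integral {E Ω : Type*} [NormedAddCommGroup E] [MeasurableSpace Ω]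
    {μ : Measure Ω} {f : Ω → E} (hf : MemLp f 2 μ) :
    ‖hf.toLp f‖ = √(∫ s, ‖f s‖ ^ 2 ∂μ) := by
  rw [Lp.norm_toLp, hf.eLpNorm_eq_integral_rpow_norm two_ne_zero ENNReal.ofNat_ne_top,
    ENNReal.toReal_ofReal (by positivity), Real.sqrt_eq_rpow]
  simp only [ENNReal.toReal_ofNat, Real.rpow_two, one_div]

variable (𝕜 : Type*) {E Ω : Type*} [RCLike 𝕜] [NormedAddCommGroup E] [InnerProductSpace 𝕜 E]
  [MeasurableSpace Ω] {μ : Measure Ω} {f g : Ω → E}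

lemma inner_toLp_ae_eq {p q : ENNReal} (hf : MemLp f p μ) (hg : MemLp g q μ) :
    (fun s => ⟪hf.toLp f s, hg.toLp g s⟫_𝕜) =ᵐ[μ] fun s => ⟪f s, g s⟫_𝕜 := by
  filter_upwards [hf.coeFn_toLp, hg.coeFn_toLp] with s hfs hgs
  rw [hfs, hgs]

lemma inner_toLp_eq_integral (hf : MemLp f 2 μ) (hg : MemLp g 2 μ) :
    ⟪hf.toLp f, hg.toLp g⟫_𝕜 = ∫ s, ⟪f s, g s⟫_𝕜 ∂μ :=
  integral_congr_ae (inner_toLp_ae_eq 𝕜 hf hg)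

lemma re_inner_toLp_eq_integral (hf : MemLp f 2 μ) (hg : MemLp g 2 μ) :
    re ⟪hf.toLp f, hg.toLp g⟫_𝕜 = ∫ s, re ⟪f s, g s⟫_𝕜 ∂μ := by
  have integrable_inner : Integrable (fun s => ⟪f s, g s⟫_𝕜) μ :=
    (L2.integrable_inner _ _).congr (inner_toLp_ae_eq 𝕜 hf hg)
  rw [inner_toLp_eq_integral, integral_re integrable_inner]

variable {𝕜}

theorem integral_reverse_schwarz {a A : 𝕜} (ha : 0 < re (conj a * A))
    (hf : MemLp f 2 μ) (hg : MemLp g 2 μ)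
    (h : 0 ≤ ∫ s, re ⟪f s - a • g s, A • g s - f s⟫_𝕜 ∂μ) :
    √((∫ s, ‖f s‖ ^ 2 ∂μ) * ∫ s, ‖g s‖ ^ 2 ∂μ) ≤
        1 / 2 * (∫ s, re ⟪f s, (A + a) • g s⟫_𝕜 ∂μ) / √(re (conj a * A)) ∧
      1 / 2 * (∫ s, re ⟪f s, (A + a) • g s⟫_𝕜 ∂μ) / √(re (conj a * A)) ≤
        1 / 2 * ((‖A‖ + ‖a‖) / √(re (conj a * A))) * ‖∫ s, ⟪g s, f s⟫_𝕜 ∂μ‖ := by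
  have re_inner_sub : re ⟪hf.toLp f - a • hg.toLp g, A • hg.toLp g - hf.toLp f⟫_𝕜 =
      ∫ s, re ⟪f s - a • g s, A • g s - f s⟫_𝕜 ∂μ :=
    re_inner_toLp_eq_integral 𝕜 (hf.sub (hg.const_smul a)) ((hg.const_smul A).sub hf)
  have re_inner_add : re ⟪hf.toLp f, (A + a) • hg.toLp g⟫_𝕜 =
      ∫ s, re ⟪f s, (A + a) • g s⟫_𝕜 ∂μ :=
    re_inner_toLp_eq_integral 𝕜 hf (hg.const_smul (A + a))
  rw [Real.sqrt_mul (by positivity), ← norm_toLp_eq_sqrt_integral hf,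
    ← norm_toLp_eq_sqrt_integral hg, ← re_inner_add, ← inner_toLp_eq_integral 𝕜 hg hf]
  refine ⟨norm_mul_norm_le_re_inner_add_smul_div ha (re_inner_sub ▸ h), ?_⟩
  rw [mul_div_assoc, mul_assoc, div_mul_eq_mul_div (‖A‖ + ‖a‖)]
  gcongr
  exact re_inner_add_smul_le a A _ _

end SquareIntegrable

section Weight

variable {E Ω : Type*} [NormedAddCommGroup E] [MeasurableSpace Ω] {μ : Measure Ω}
  {ρ : Ω → ℝ} {f g : Ω → E}

lemma integral_withDensity_ofReal [NormedSpace ℝ E] (hρm : AEMeasurable ρ μ) (hρ : 0 ≤ᵐ[μ] ρ)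
    (f : Ω → E) :
    ∫ s, f s ∂μ.withDensity (fun s => ENNReal.ofReal (ρ s)) = ∫ s, ρ s • f s ∂μ := by
  rw [integral_withDensity_eq_integral_toReal_smul₀ hρm.ennreal_ofReal (by simp)]
  refine integral_congr_ae ?_
  filter_upwards [hρ] with s hs
  rw [ENNReal.toReal_ofReal hs]

lemma memLp_two_withDensity_ofReal (hρm : AEMeasurable ρ μ) (hρ : 0 ≤ᵐ[μ] ρ)
    (hfm : AEStronglyMeasurable f μ) (hf2 : Integrable (fun s => ρ s * ‖f s‖ ^ 2) μ) :
    MemLp f 2 (μ.withDensity fun s => ENNReal.ofReal (ρ s)) := by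
  rw [memLp_two_iff_integrable_sq_norm (hfm.mono_ac (withDensity_absolutelyContinuous μ _)),
    integrable_withDensity_iff_integrable_smul₀' hρm.ennreal_ofReal (by simp)]
  refine hf2.congr ?_
  filter_upwards [hρ] with s hs
  rw [ENNReal.toReal_ofReal hs, smul_eq_mul]

theorem weighted_integral_reverse_schwarz_general {𝕜 : Type*} [RCLike 𝕜]
    [InnerProductSpace 𝕜 E] (hρm : AEMeasurable ρ μ) (hρ : 0 ≤ᵐ[μ] ρ)
    {a A : 𝕜} (ha : 0 < re (conj a * A))
    (hfm : AEStronglyMeasurable f μ) (hgm : AEStronglyMeasurable g μ)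
    (hf2 : Integrable (fun s => ρ s * ‖f s‖ ^ 2) μ)
    (hg2 : Integrable (fun s => ρ s * ‖g s‖ ^ 2) μ)
    (h : 0 ≤ ∫ s, ρ s * re ⟪f s - a • g s, A • g s - f s⟫_𝕜 ∂μ) :
    √((∫ s, ρ s * ‖f s‖ ^ 2 ∂μ) * ∫ s, ρ s * ‖g s‖ ^ 2 ∂μ) ≤
        1 / 2 * (∫ s, ρ s * re (A * ⟪f s, g s⟫_𝕜 + conj a * ⟪g s, f s⟫_𝕜) ∂μ) /
          √(re (conj a * A)) ∧
      1 / 2 * (∫ s, ρ s * re (A * ⟪f s, g s⟫_𝕜 + conj a * ⟪g s, f s⟫_𝕜) ∂μ) /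
          √(re (conj a * A)) ≤
        1 / 2 * ((‖A‖ + ‖a‖) / √(re (conj a * A))) * ‖∫ s, ρ s • ⟪g s, f s⟫_𝕜 ∂μ‖ := by
  simp only [← re_inner_add_smul, ← smul_eq_mul (ρ _), ← integral_withDensity_ofReal hρm hρ] at h ⊢
  exact integral_reverse_schwarz ha (memLp_two_withDensity_ofReal hρm hρ hfm hf2)
    (memLp_two_withDensity_ofReal hρm hρ hgm hg2) h

end Weight

/-- Proposition 4.1: counterpart of the weighted Cauchy–Bunyakovsky–Schwarz
integral inequality. -/
theorem weighted_integral_reverse_schwarz {𝕜 Ω : Type*} [RCLike 𝕜] [MeasurableSpace Ω]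
    (μ : Measure Ω) (ρ : Ω → ℝ) (hρm : Measurable ρ) (hρ : ∀ s, 0 ≤ ρ s)
    (a A : 𝕜) (ha : 0 < re (conj a * A))
    (f g : Ω → 𝕜) (hfm : Measurable f) (hgm : Measurable g)
    (hf2 : Integrable (fun s => ρ s * ‖f s‖ ^ 2) μ)
    (hg2 : Integrable (fun s => ρ s * ‖g s‖ ^ 2) μ)
    (h : 0 ≤ ∫ s, re ((A * g s - f s) * (conj (f s) - conj a * conj (g s))) * ρ s ∂μ) :
    Real.sqrt ((∫ s, ρ s * ‖f s‖ ^ 2 ∂μ) * (∫ s, ρ s * ‖g s‖ ^ 2 ∂μ)) ≤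
        1 / 2 * (∫ s, ρ s * re (A * conj (f s) * g s + conj a * f s * conj (g s)) ∂μ) /
          Real.sqrt (re (conj a * A)) ∧
      1 / 2 * (∫ s, ρ s * re (A * conj (f s) * g s + conj a * f s * conj (g s)) ∂μ) /
          Real.sqrt (re (conj a * A)) ≤
        1 / 2 * ((‖A‖ + ‖a‖) / Real.sqrt (re (conj a * A))) *
          ‖∫ s, (ρ s : 𝕜) * f s * conj (g s) ∂μ‖ := by
  simpa [mul_assoc, mul_comm, mul_left_comm, real_smul_eq_coe_mul] using
    weighted_integral_reverse_schwarz_general hρm.aemeasurable (ae_of_all μ hρ) ha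
      hfm.aestronglyMeasurable hgm.aestronglyMeasurable hf2 hg2 (by simpa [mul_comm] using h)
end

section
/- Let (Ω, Σ, μ) be a measure space, ρ : Ω → [0, ∞) measurable, and 𝕜 = ℝ or ℂ. Let m, M > 0 be real numbers, and let f, g : Ω → 𝕜 be measurable with ∫ ρ(s)·|f(s)|² dμ(s) < ∞ and ∫ ρ(s)·|g(s)|² dμ(s) < ∞. If ∫ ρ(s)·Re[(M·g(s) − f(s))·(conj(f(s)) − m·conj(g(s)))] dμ(s) ≥ 0, then 0 ≤ (∫ ρ·|f|² dμ)·(∫ ρ·|g|² dμ) − (∫ ρ(s)·Re[f(s)·conj(g(s))] dμ(s))² ≤ (M − m)²/(4·m·M) · (∫ ρ(s)·Re[f(s)·conj(g(s))] dμ(s))². -/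
open RCLike ComplexConjugate MeasureTheory

/-!
Multiplying by `√ρ` turns the weighted integrals into norms and inner products of two vectors
`x`, `y` of an `L²` space, and the hypothesis into `0 ≤ ⟪M • y - x, x - m • y⟫`. The lower bound is
then the Cauchy–Schwarz inequality. Expanding the hypothesis gives
`‖x‖² + m M ‖y‖² ≤ (m + M) ⟪x, y⟫`, and the upper bound follows by squaring and applying
`4ab ≤ (a + b)²` to the left-hand side.
-/

section InnerProductSpace

variable {E : Type*} [SeminormedAddCommGroup E] [InnerProductSpace ℝ E]

lemma real_inner_smul_sub_sub_smul (m M : ℝ) (x y : E) :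
    inner ℝ (M • y - x) (x - m • y) =
      (m + M) * inner ℝ x y - (‖x‖ ^ 2 + m * M * ‖y‖ ^ 2) := by
  simp only [inner_sub_left, inner_sub_right, real_inner_smul_left, real_inner_smul_right,
    real_inner_self_eq_norm_sq, real_inner_comm x y]
  ring

lemma four_mul_norm_sq_mul_norm_sq_le_of_inner_nonneg {m M : ℝ} (hmM : 0 ≤ m * M) {x y : E}
    (h : 0 ≤ inner ℝ (M • y - x) (x - m • y)) :
    4 * (m * M) * (‖x‖ ^ 2 * ‖y‖ ^ 2) ≤ (m + M) ^ 2 * inner ℝ x y ^ 2 := by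
  rw [real_inner_smul_sub_sub_smul, sub_nonneg] at h
  calc 4 * (m * M) * (‖x‖ ^ 2 * ‖y‖ ^ 2)
      = 4 * ‖x‖ ^ 2 * (m * M * ‖y‖ ^ 2) := by ring
    _ ≤ (‖x‖ ^ 2 + m * M * ‖y‖ ^ 2) ^ 2 := four_mul_le_sq_add _ _
    _ ≤ ((m + M) * inner ℝ x y) ^ 2 := pow_le_pow_left₀ (by positivity) h 2
    _ = (m + M) ^ 2 * inner ℝ x y ^ 2 := mul_pow _ _ _

lemma norm_sq_mul_norm_sq_sub_inner_sq_nonneg (x y : E) :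
    0 ≤ ‖x‖ ^ 2 * ‖y‖ ^ 2 - inner ℝ x y ^ 2 := by
  rw [sub_nonneg, ← mul_pow, sq_le_sq, abs_of_nonneg (by positivity : 0 ≤ ‖x‖ * ‖y‖)]
  exact abs_real_inner_le_norm x y

lemma norm_sq_mul_norm_sq_sub_inner_sq_le_of_inner_nonneg {m M : ℝ} (hmM : 0 < m * M) {x y : E}
    (h : 0 ≤ inner ℝ (M • y - x) (x - m • y)) :
    ‖x‖ ^ 2 * ‖y‖ ^ 2 - inner ℝ x y ^ 2 ≤ (M - m) ^ 2 / (4 * m * M) * inner ℝ x y ^ 2 := by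
  have hpos : 0 < 4 * m * M := by linarith
  rw [div_mul_eq_mul_div, le_div_iff₀ hpos]
  linear_combination four_mul_norm_sq_mul_norm_sq_le_of_inner_nonneg hmM.le h

end InnerProductSpace

section SqrtWeight

variable {Ω E : Type*} [MeasurableSpace Ω] {μ : Measure Ω} [NormedAddCommGroup E]
  [NormedSpace ℝ E] {ρ : Ω → ℝ} {f : Ω → E}

lemma sqrt_smul_eq_sqrt_mul_norm_sq_smul (r : ℝ) (v : E) :
    √r • v = √(r * ‖v‖ ^ 2) • ‖v‖⁻¹ • v := by
  rcases eq_or_ne v 0 with rfl | hv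
  · simp only [smul_zero]
  · rw [Real.sqrt_mul' _ (sq_nonneg _), Real.sqrt_sq (norm_nonneg _), smul_smul, mul_assoc,
      mul_inv_cancel₀ (norm_ne_zero_iff.mpr hv), mul_one]

lemma aestronglyMeasurable_sqrt_smul (hf : AEStronglyMeasurable f μ)
    (hρf : AEMeasurable (fun s => ρ s * ‖f s‖ ^ 2) μ) :
    AEStronglyMeasurable (fun s => √(ρ s) • f s) μ := by
  -- Normalizing `f` leaves `ρ` only in the measurable product `ρ * ‖f‖ ^ 2`.
  rw [funext fun s => sqrt_smul_eq_sqrt_mul_norm_sq_smul (ρ s) (f s)]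
  exact hρf.sqrt.aestronglyMeasurable.smul (hf.norm.aemeasurable.inv.aestronglyMeasurable.smul hf)

lemma memLp_two_sqrt_smul (hρ : 0 ≤ᵐ[μ] ρ) (hf : AEStronglyMeasurable f μ)
    (hf2 : Integrable (fun s => ρ s * ‖f s‖ ^ 2) μ) :
    MemLp (fun s => √(ρ s) • f s) 2 μ := by
  rw [memLp_two_iff_integrable_sq_norm (aestronglyMeasurable_sqrt_smul hf hf2.aemeasurable)]
  refine hf2.congr ?_
  filter_upwards [hρ] with s hρs
  rw [norm_smul, mul_pow, Real.norm_eq_abs, sq_abs, Real.sq_sqrt hρs]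

end SqrtWeight

section WeightedIntegral

variable {Ω E : Type*} [MeasurableSpace Ω] {μ : Measure Ω} [NormedAddCommGroup E]
  [InnerProductSpace ℝ E] {ρ : Ω → ℝ} {f g : Ω → E}

lemma inner_eq_integral_mul_inner_of_ae_eq_sqrt_smul (hρ : 0 ≤ᵐ[μ] ρ) {F G : Lp E 2 μ}
    (hF : F =ᵐ[μ] fun s => √(ρ s) • f s) (hG : G =ᵐ[μ] fun s => √(ρ s) • g s) :
    inner ℝ F G = ∫ s, ρ s * inner ℝ (f s) (g s) ∂μ := by
  rw [L2.inner_def]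
  refine integral_congr_ae ?_
  filter_upwards [hρ, hF, hG] with s hρs hFs hGs
  rw [hFs, hGs, real_inner_smul_left, real_inner_smul_right, ← mul_assoc, Real.mul_self_sqrt hρs]

lemma norm_sq_eq_integral_mul_norm_sq_of_ae_eq_sqrt_smul (hρ : 0 ≤ᵐ[μ] ρ) {F : Lp E 2 μ}
    (hF : F =ᵐ[μ] fun s => √(ρ s) • f s) : ‖F‖ ^ 2 = ∫ s, ρ s * ‖f s‖ ^ 2 ∂μ := by
  simpa only [real_inner_self_eq_norm_sq] using
    inner_eq_integral_mul_inner_of_ae_eq_sqrt_smul hρ hF hF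

theorem weighted_integral_cassels_additive_squares_general (hρ : 0 ≤ᵐ[μ] ρ) {m M : ℝ}
    (hmM : 0 < m * M) (hf : AEStronglyMeasurable f μ) (hg : AEStronglyMeasurable g μ)
    (hf2 : Integrable (fun s => ρ s * ‖f s‖ ^ 2) μ)
    (hg2 : Integrable (fun s => ρ s * ‖g s‖ ^ 2) μ)
    (h : 0 ≤ ∫ s, ρ s * inner ℝ (M • g s - f s) (f s - m • g s) ∂μ) :
    0 ≤ (∫ s, ρ s * ‖f s‖ ^ 2 ∂μ) * (∫ s, ρ s * ‖g s‖ ^ 2 ∂μ) -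
        (∫ s, ρ s * inner ℝ (f s) (g s) ∂μ) ^ 2 ∧
      (∫ s, ρ s * ‖f s‖ ^ 2 ∂μ) * (∫ s, ρ s * ‖g s‖ ^ 2 ∂μ) -
          (∫ s, ρ s * inner ℝ (f s) (g s) ∂μ) ^ 2 ≤
        (M - m) ^ 2 / (4 * m * M) * (∫ s, ρ s * inner ℝ (f s) (g s) ∂μ) ^ 2 := by
  obtain ⟨F, hF⟩ : ∃ F : Lp E 2 μ, F =ᵐ[μ] fun s => √(ρ s) • f s :=
    ⟨_, (memLp_two_sqrt_smul hρ hf hf2).coeFn_toLp⟩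
  obtain ⟨G, hG⟩ : ∃ G : Lp E 2 μ, G =ᵐ[μ] fun s => √(ρ s) • g s :=
    ⟨_, (memLp_two_sqrt_smul hρ hg hg2).coeFn_toLp⟩
  have hMGF : ⇑(M • G - F) =ᵐ[μ] fun s => √(ρ s) • (M • g s - f s) := by
    filter_upwards [Lp.coeFn_sub (M • G) F, Lp.coeFn_smul M G, hF, hG] with s hsub hsmul hFs hGs
    rw [hsub, Pi.sub_apply, hsmul, Pi.smul_apply, hFs, hGs, smul_sub, smul_comm]
  have hFmG : ⇑(F - m • G) =ᵐ[μ] fun s => √(ρ s) • (f s - m • g s) := by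
    filter_upwards [Lp.coeFn_sub F (m • G), Lp.coeFn_smul m G, hF, hG] with s hsub hsmul hFs hGs
    rw [hsub, Pi.sub_apply, hsmul, Pi.smul_apply, hFs, hGs, smul_sub, smul_comm m]
  rw [← inner_eq_integral_mul_inner_of_ae_eq_sqrt_smul hρ hMGF hFmG] at h
  rw [← norm_sq_eq_integral_mul_norm_sq_of_ae_eq_sqrt_smul hρ hF,
    ← norm_sq_eq_integral_mul_norm_sq_of_ae_eq_sqrt_smul hρ hG,
    ← inner_eq_integral_mul_inner_of_ae_eq_sqrt_smul hρ hF hG]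
  exact ⟨norm_sq_mul_norm_sq_sub_inner_sq_nonneg F G,
    norm_sq_mul_norm_sq_sub_inner_sq_le_of_inner_nonneg hmM h⟩

end WeightedIntegral

lemma real_inner_eq_re_mul_conj {𝕜 : Type*} [RCLike 𝕜] (z w : 𝕜) :
    inner ℝ z w = re (z * conj w) :=
  real_inner_comm w z

/-- Corollary 4.6, inequality (4.10). -/
theorem weighted_integral_cassels_additive_squares {𝕜 Ω : Type*} [RCLike 𝕜] [MeasurableSpace Ω]
    (μ : Measure Ω) (ρ : Ω → ℝ) (hρm : Measurable ρ) (hρ : ∀ s, 0 ≤ ρ s)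
    (m M : ℝ) (hm : 0 < m) (hM : 0 < M)
    (f g : Ω → 𝕜) (hfm : Measurable f) (hgm : Measurable g)
    (hf2 : Integrable (fun s => ρ s * ‖f s‖ ^ 2) μ)
    (hg2 : Integrable (fun s => ρ s * ‖g s‖ ^ 2) μ)
    (h : 0 ≤ ∫ s, ρ s * re (((M : 𝕜) * g s - f s) * (conj (f s) - (m : 𝕜) * conj (g s))) ∂μ) :
    0 ≤ (∫ s, ρ s * ‖f s‖ ^ 2 ∂μ) * (∫ s, ρ s * ‖g s‖ ^ 2 ∂μ) -
        (∫ s, ρ s * re (f s * conj (g s)) ∂μ) ^ 2 ∧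
      (∫ s, ρ s * ‖f s‖ ^ 2 ∂μ) * (∫ s, ρ s * ‖g s‖ ^ 2 ∂μ) -
          (∫ s, ρ s * re (f s * conj (g s)) ∂μ) ^ 2 ≤
        (M - m) ^ 2 / (4 * m * M) * (∫ s, ρ s * re (f s * conj (g s)) ∂μ) ^ 2 := by
  simpa only [real_inner_eq_re_mul_conj] using
    weighted_integral_cassels_additive_squares_general (.of_forall hρ) (mul_pos hm hM)
      hfm.aestronglyMeasurable hgm.aestronglyMeasurable hf2 hg2
      (by simpa only [real_inner_eq_re_mul_conj, real_smul_eq_coe_mul, map_sub, map_mul,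
        conj_ofReal] using h)
end
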